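/- ψ(3/8) = −γ − (√2 − 1)·(π/2) − 4·ln 2 + √2·ln(1 + √2), where ψ is the digamma function and γ is the Euler–Mascheroni constant. -/

import Mathlib

noncomputable def digamma (x : ℝ) : ℝ := deriv Real.Gamma x / Real.Gamma x

/-!
Log-convexity of `Γ` gives `ψ(x) = lim (log n - ∑ 1 / (x + k))`, so for a `q`-periodic weight `a`
with zero mean over a period, `∑ a i * ψ((i + 1) / q)`, over one period, is `-q` times the sum of
the series `∑ a l / (l + 1)`. For the weights `cos ((l + 1) θ)` with `θ = 2 π j / q`, that series
is the Fourier expansion of `-log (2 sin (θ / 2))`. Inverting this discrete cosine transform gives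
`ψ(r / q) + ψ(1 - r / q)`, and the reflection formula gives their difference; together they are
Gauss's digamma theorem for `ψ(r / q)`. For `r / q = 3 / 8`, the trigonometric values all follow
from `cos (π / 8) = (1 + √2) sin (π / 8)`.
-/

open Real Filter Topology Finset

lemma ne_neg_natCast_of_pos {x : ℝ} (hx : 0 < x) (m : ℕ) : x ≠ -m := by
  have := m.cast_nonneg (α := ℝ)
  linarith

lemma digamma_eq_logDeriv_Gamma : digamma = logDeriv Gamma := rfl

lemma hasDerivAt_log_Gamma {x : ℝ} (hx : ∀ m : ℕ, x ≠ -m) :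
    HasDerivAt (log ∘ Gamma) (digamma x) x :=
  (differentiableAt_Gamma hx).hasDerivAt.log (Gamma_ne_zero hx)

lemma digamma_one : digamma 1 = -eulerMascheroniConstant := by
  rw [digamma, hasDerivAt_Gamma_one.deriv, Gamma_one, div_one]

lemma digamma_add_one {x : ℝ} (hx : ∀ m : ℕ, x ≠ -m) : digamma (x + 1) = digamma x + 1 / x := by
  have hx₀ : x ≠ 0 := by simpa using hx 0
  have h_feq : (fun y ↦ Gamma (y + 1)) =ᶠ[𝓝 x] fun y ↦ y * Gamma y :=
    (eventually_ne_nhds hx₀).mono fun y hy ↦ Gamma_add_one hy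
  calc digamma (x + 1) = logDeriv (fun y ↦ Gamma (y + 1)) x := by
        rw [logDeriv_apply, deriv_comp_add_const, digamma]
    _ = logDeriv (fun y ↦ y * Gamma y) x := (logDeriv_congr_nhds h_feq).eq_of_nhds
    _ = digamma x + 1 / x := by
        rw [logDeriv_mul x hx₀ (Gamma_ne_zero hx) differentiableAt_fun_id
          (differentiableAt_Gamma hx), logDeriv_id', add_comm, digamma_eq_logDeriv_Gamma]

lemma digamma_add_natCast {x : ℝ} (hx : ∀ m : ℕ, x ≠ -m) (n : ℕ) :
    digamma (x + n) = digamma x + ∑ k ∈ range n, 1 / (x + k) := by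
  induction n with
  | zero => simp
  | succ n ih =>
    have hxn (m : ℕ) : x + n ≠ -m := fun h ↦ hx (n + m) (by push_cast; linarith)
    rw [Nat.cast_succ, ← add_assoc, digamma_add_one hxn, ih, sum_range_succ, add_assoc]

lemma digamma_one_sub {x : ℝ} (hx : ∀ m : ℤ, x ≠ m) :
    digamma (1 - x) = digamma x + π * cot (π * x) := by
  have hx' (m : ℕ) : x ≠ -m := by exact_mod_cast hx (-m)
  have hx'' (m : ℕ) : 1 - x ≠ -m := fun h ↦ hx (1 + m) (by push_cast; linarith)
  have h_sin : sin (π * x) ≠ 0 := fun h ↦ by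
    obtain ⟨m, hm⟩ := sin_eq_zero_iff.1 h
    exact hx m (mul_left_cancel₀ pi_ne_zero (by linarith))
  have h_Gamma_sub : DifferentiableAt ℝ (fun y ↦ Gamma (1 - y)) x :=
    (differentiableAt_Gamma hx'').comp x (differentiableAt_id.const_sub 1)
  have h_prod : logDeriv (fun y ↦ Gamma y * Gamma (1 - y)) x = digamma x - digamma (1 - x) := by
    rw [logDeriv_mul (g := fun y ↦ Gamma (1 - y)) x (Gamma_ne_zero hx') (Gamma_ne_zero hx'')
      (differentiableAt_Gamma hx') h_Gamma_sub, logDeriv_apply (fun y ↦ Gamma (1 - y)),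
      deriv_comp_const_sub, neg_div, ← sub_eq_add_neg, digamma, digamma, logDeriv_apply]
  have h_sine : logDeriv (fun y ↦ π / sin (π * y)) x = -(π * cot (π * x)) := by
    rw [logDeriv_div x pi_ne_zero h_sin (by fun_prop) (by fun_prop), logDeriv_const,
      ← Function.comp_def sin, logDeriv_comp (by fun_prop) (by fun_prop), logDeriv_sin,
      deriv_const_mul_id]
    simp [mul_comm]
  simp only [Gamma_mul_Gamma_one_sub, h_sine] at h_prod
  linarith

lemma slope_log_Gamma {x : ℝ} (hx : 0 < x) : slope (log ∘ Gamma) x (x + 1) = log x := by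
  rw [slope_def_field, Function.comp_apply, Function.comp_apply, Gamma_add_one hx.ne',
    log_mul hx.ne' (Gamma_pos_of_pos hx).ne', add_sub_cancel_right, add_sub_cancel_left, div_one]

lemma digamma_le_log {x : ℝ} (hx : 0 < x) : digamma x ≤ log x := by
  have h_deriv := hasDerivAt_log_Gamma (ne_neg_natCast_of_pos hx)
  rw [← slope_log_Gamma hx, ← h_deriv.deriv]
  exact convexOn_log_Gamma.deriv_le_slope hx (add_pos hx one_pos) (lt_add_one x)
    h_deriv.differentiableAt

lemma log_le_digamma_add_one {x : ℝ} (hx : 0 < x) : log x ≤ digamma (x + 1) := by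
  have h_deriv := hasDerivAt_log_Gamma (ne_neg_natCast_of_pos (add_pos hx one_pos))
  rw [← slope_log_Gamma hx, ← h_deriv.deriv]
  exact convexOn_log_Gamma.slope_le_deriv hx (add_pos hx one_pos) (lt_add_one x)
    h_deriv.differentiableAt

lemma tendsto_digamma_sub_log_atTop : Tendsto (fun x ↦ digamma x - log x) atTop (𝓝 0) := by
  have h_lower : Tendsto (fun x : ℝ ↦ -(1 / x)) atTop (𝓝 0) := by
    simpa using (tendsto_inv_atTop_zero (𝕜 := ℝ)).neg
  refine tendsto_of_tendsto_of_tendsto_of_le_of_le' h_lower tendsto_const_nhds ?_ ?_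
  · filter_upwards [eventually_gt_atTop 0] with x hx
    have := log_le_digamma_add_one hx
    rw [digamma_add_one (ne_neg_natCast_of_pos hx)] at this
    linarith
  · filter_upwards [eventually_gt_atTop 0] with x hx
    exact sub_nonpos.2 (digamma_le_log hx)

lemma tendsto_log_sub_sum_one_div {x : ℝ} (hx : ∀ m : ℕ, x ≠ -m) :
    Tendsto (fun n : ℕ ↦ log n - ∑ k ∈ range n, 1 / (x + k)) atTop (𝓝 (digamma x)) := by
  have h_shift : Tendsto (fun n : ℕ ↦ digamma (n + x) - log (n + x)) atTop (𝓝 0) :=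
    tendsto_digamma_sub_log_atTop.comp
      (tendsto_atTop_add_const_right _ x tendsto_natCast_atTop_atTop)
  have h_log : Tendsto (fun n : ℕ ↦ log (n + x) - log n) atTop (𝓝 0) :=
    (tendsto_log_comp_add_sub_log x).comp tendsto_natCast_atTop_atTop
  have h_lim := (h_shift.add h_log).const_sub (digamma x)
  simp only [add_zero, sub_zero] at h_lim
  refine h_lim.congr fun n ↦ ?_
  rw [add_comm (n : ℝ) x, digamma_add_natCast hx]
  ring

lemma sum_range_mul {M : Type*} [AddCommMonoid M] (f : ℕ → M) (q n : ℕ) :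
    ∑ l ∈ range (q * n), f l = ∑ m ∈ range n, ∑ i ∈ range q, f (q * m + i) := by
  induction n with
  | zero => simp
  | succ n ih => rw [Nat.mul_succ, sum_range_add, ih, sum_range_succ]

lemma tendsto_sum_periodic_mul_digamma {q : ℕ} (hq : q ≠ 0) {a : ℕ → ℝ}
    (ha : Function.Periodic a q) {x : ℝ} (hx : ∀ m : ℕ, x ≠ -m) :
    Tendsto (fun n : ℕ ↦ (∑ i ∈ range q, a i) * log n - q * ∑ l ∈ range (q * n), a l / (x + l))
      atTop (𝓝 (∑ i ∈ range q, a i * digamma ((x + i) / q))) := by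
  have hq' : (q : ℝ) ≠ 0 := Nat.cast_ne_zero.2 hq
  have hxi (i m : ℕ) : (x + i) / q ≠ -m := fun h ↦ hx (m * q + i) (by
    rw [div_eq_iff hq'] at h
    push_cast
    linarith)
  have h_lim := tendsto_finsetSum (range q) fun i _ ↦
    (tendsto_log_sub_sum_one_div (hxi i)).const_mul (a i)
  refine h_lim.congr fun n ↦ ?_
  have h_term (m i : ℕ) : a i * (1 / ((x + i) / q + m)) =
      q * (a (q * m + i) / (x + (q * m + i : ℕ))) := by
    rw [show a (q * m + i) = a i by simpa [add_comm, mul_comm] using ha.nat_mul m i]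
    rw [Nat.cast_add, Nat.cast_mul, ← add_assoc, add_right_comm, div_add' _ _ _ hq', one_div_div]
    ring
  simp_rw [mul_sub, sum_sub_distrib, ← sum_mul, sum_range_mul, mul_sum, h_term]
  rw [sum_comm]

theorem sum_digamma_add_div {q : ℕ} (hq : q ≠ 0) {x : ℝ} (hx : ∀ m : ℕ, x ≠ -m) :
    ∑ i ∈ range q, digamma ((x + i) / q) = q * (digamma x - log q) := by
  have h_sum := tendsto_sum_periodic_mul_digamma hq (a := fun _ ↦ 1) (fun _ ↦ rfl) hx
  have h_sub : Tendsto (fun n : ℕ ↦ log ↑(q * n) - ∑ l ∈ range (q * n), 1 / (x + l)) atTop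
      (𝓝 (digamma x)) :=
    (tendsto_log_sub_sum_one_div hx).comp
      (tendsto_id.const_mul_atTop' (Nat.pos_of_ne_zero hq))
  simp only [one_mul] at h_sum
  refine tendsto_nhds_unique h_sum (((h_sub.sub_const (log q)).const_mul (q : ℝ)).congr' ?_)
  filter_upwards [eventually_ne_atTop 0] with n hn
  rw [Nat.cast_mul, log_mul (by exact_mod_cast hq) (by exact_mod_cast hn)]
  rw [sum_const, card_range, nsmul_one]
  ring

lemma one_sub_two_mul_cos_add_sq (θ u : ℝ) :
    1 - 2 * u * cos θ + u ^ 2 =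
      cos (θ / 2) ^ 2 * (1 - u) ^ 2 + sin (θ / 2) ^ 2 * (1 + u) ^ 2 := by
  have h_double : cos θ = 2 * cos (θ / 2) ^ 2 - 1 := by
    rw [← cos_two_mul, mul_div_cancel₀ θ two_ne_zero]
  rw [sin_sq, h_double]
  ring

lemma sin_half_sq_le {u : ℝ} (hu : 0 ≤ u) (θ : ℝ) :
    sin (θ / 2) ^ 2 ≤ 1 - 2 * u * cos θ + u ^ 2 := by
  rw [one_sub_two_mul_cos_add_sq]
  calc sin (θ / 2) ^ 2 ≤ sin (θ / 2) ^ 2 * (1 + u) ^ 2 :=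
        le_mul_of_one_le_right (sq_nonneg _) (one_le_pow₀ (by linarith))
    _ ≤ _ := le_add_of_nonneg_left (by positivity)

lemma one_sub_two_mul_cos_add_sq_pos {θ u : ℝ} (hθ : sin (θ / 2) ≠ 0) (hu : 0 ≤ u) :
    0 < 1 - 2 * u * cos θ + u ^ 2 :=
  (sq_pos_of_ne_zero hθ).trans_le (sin_half_sq_le hu θ)

lemma sum_cos_mul_pow (θ u : ℝ) (n : ℕ) :
    (1 - 2 * u * cos θ + u ^ 2) * ∑ l ∈ range n, cos ((l + 1) * θ) * u ^ l =
      cos θ - u - u ^ n * (cos ((n + 1) * θ) - u * cos (n * θ)) := by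
  induction n with
  | zero => simp
  | succ n ih =>
    have h_three_term : cos ((n + 1 + 1) * θ) = 2 * cos θ * cos ((n + 1) * θ) - cos (n * θ) := by
      rw [mul_right_comm, two_mul_cos_mul_cos]
      ring_nf
    rw [sum_range_succ, mul_add, ih, Nat.cast_succ, h_three_term]
    ring

lemma intervalIntegrable_div_one_sub_two_mul_cos_add_sq {θ : ℝ} (hθ : sin (θ / 2) ≠ 0)
    {f : ℝ → ℝ} (hf : Continuous f) :
    IntervalIntegrable (fun u ↦ f u / (1 - 2 * u * cos θ + u ^ 2)) MeasureTheory.volume 0 1 := by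
  refine ContinuousOn.intervalIntegrable_of_Icc zero_le_one
    (hf.continuousOn.div (by fun_prop) fun u hu ↦ ?_)
  exact (one_sub_two_mul_cos_add_sq_pos hθ hu.1).ne'

lemma integral_cos_sub_div {θ : ℝ} (hθ : sin (θ / 2) ≠ 0) :
    ∫ u in (0 : ℝ)..1, (cos θ - u) / (1 - 2 * u * cos θ + u ^ 2) = -log (2 * sin (θ / 2)) := by
  have h_deriv : ∀ u ∈ Set.uIcc (0 : ℝ) 1,
      HasDerivAt (fun u ↦ -(log (1 - 2 * u * cos θ + u ^ 2) / 2))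
        ((cos θ - u) / (1 - 2 * u * cos θ + u ^ 2)) u := fun u hu ↦ by
    rw [Set.uIcc_of_le zero_le_one] at hu
    have h_poly : HasDerivAt (fun u ↦ 1 - 2 * u * cos θ + u ^ 2) (-(2 * cos θ) + 2 * u) u := by
      simpa using ((((hasDerivAt_id' u).const_mul 2).mul_const (cos θ)).const_sub 1).fun_add
        ((hasDerivAt_id' u).fun_pow 2)
    have h_pos := one_sub_two_mul_cos_add_sq_pos hθ hu.1
    exact ((h_poly.log h_pos.ne').div_const 2).neg.congr_deriv (by ring)
  have h_one : 1 - 2 * 1 * cos θ + 1 ^ 2 = (2 * sin (θ / 2)) ^ 2 := by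
    rw [one_sub_two_mul_cos_add_sq]
    ring
  rw [intervalIntegral.integral_eq_sub_of_hasDerivAt h_deriv
    (intervalIntegrable_div_one_sub_two_mul_cos_add_sq hθ (by fun_prop)), h_one, log_pow]
  simp

lemma abs_integral_pow_mul_le {g : ℝ → ℝ} {C : ℝ} (hg : ∀ u ∈ Set.Icc (0 : ℝ) 1, |g u| ≤ C)
    (n : ℕ) : |∫ u in (0 : ℝ)..1, u ^ n * g u| ≤ C / (n + 1) := by
  have h_le : ∀ u ∈ Set.Ioc (0 : ℝ) 1, ‖u ^ n * g u‖ ≤ u ^ n * C := fun u hu ↦ by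
    have hu₀ : 0 ≤ u ^ n := pow_nonneg hu.1.le n
    rw [norm_mul, norm_of_nonneg hu₀]
    exact mul_le_mul_of_nonneg_left (hg u (Set.Ioc_subset_Icc_self hu)) hu₀
  have h_int : ∫ u in (0 : ℝ)..1, u ^ n * C = C / (n + 1) := by
    simp [intervalIntegral.integral_mul_const, integral_pow, inv_mul_eq_div]
  rw [← h_int]
  exact intervalIntegral.norm_integral_le_of_norm_le zero_le_one (.of_forall h_le)
    (Continuous.intervalIntegrable (by fun_prop) _ _)

lemma sum_cos_div_eq_neg_log_sub_integral {θ : ℝ} (hθ : sin (θ / 2) ≠ 0) (n : ℕ) :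
    ∑ l ∈ range n, cos ((l + 1) * θ) / (l + 1) = -log (2 * sin (θ / 2)) -
      ∫ u in (0 : ℝ)..1,
        u ^ n * ((cos ((n + 1) * θ) - u * cos (n * θ)) / (1 - 2 * u * cos θ + u ^ 2)) := by
  have h_pointwise : ∀ u ∈ Set.uIcc (0 : ℝ) 1, ∑ l ∈ range n, cos ((l + 1) * θ) * u ^ l =
      (cos θ - u) / (1 - 2 * u * cos θ + u ^ 2) -
        u ^ n * (cos ((n + 1) * θ) - u * cos (n * θ)) / (1 - 2 * u * cos θ + u ^ 2) :=
    fun u hu ↦ by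
      rw [Set.uIcc_of_le zero_le_one] at hu
      rw [← sub_div, ← sum_cos_mul_pow,
        mul_div_cancel_left₀ _ (one_sub_two_mul_cos_add_sq_pos hθ hu.1).ne']
  calc ∑ l ∈ range n, cos ((l + 1) * θ) / (l + 1)
      = ∫ u in (0 : ℝ)..1, ∑ l ∈ range n, cos ((l + 1) * θ) * u ^ l := by
        rw [intervalIntegral.integral_finsetSum fun l _ ↦
          Continuous.intervalIntegrable (by fun_prop) _ _]
        simp [integral_pow, div_eq_mul_inv]
    _ = _ := by
        simp_rw [← mul_div_assoc]
        rw [intervalIntegral.integral_congr h_pointwise, intervalIntegral.integral_sub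
          (intervalIntegrable_div_one_sub_two_mul_cos_add_sq hθ (by fun_prop))
          (intervalIntegrable_div_one_sub_two_mul_cos_add_sq hθ (by fun_prop)),
          integral_cos_sub_div hθ]

-- `Real.log` takes the absolute value of its argument, so `sin (θ / 2)` may be negative.
theorem tendsto_sum_cos_div {θ : ℝ} (hθ : sin (θ / 2) ≠ 0) :
    Tendsto (fun n : ℕ ↦ ∑ l ∈ range n, cos ((l + 1) * θ) / (l + 1)) atTop
      (𝓝 (-log (2 * sin (θ / 2)))) := by
  have h_bound (n : ℕ) : ∀ u ∈ Set.Icc (0 : ℝ) 1,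
      |(cos ((n + 1) * θ) - u * cos (n * θ)) / (1 - 2 * u * cos θ + u ^ 2)| ≤
        2 / sin (θ / 2) ^ 2 := fun u hu ↦ by
    have h_num : |cos ((n + 1) * θ) - u * cos (n * θ)| ≤ 2 :=
      calc |cos ((n + 1) * θ) - u * cos (n * θ)| ≤ |cos ((n + 1) * θ)| + |u * cos (n * θ)| :=
            abs_sub _ _
        _ ≤ 1 + 1 * 1 := by
            rw [abs_mul, abs_of_nonneg hu.1]
            gcongr
            exacts [abs_cos_le_one _, hu.2, abs_cos_le_one _]
        _ = 2 := by norm_num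
    rw [abs_div, abs_of_pos (one_sub_two_mul_cos_add_sq_pos hθ hu.1)]
    exact div_le_div₀ zero_le_two h_num (sq_pos_of_ne_zero hθ) (sin_half_sq_le hu.1 θ)
  have h_rate : Tendsto (fun n : ℕ ↦ 2 / sin (θ / 2) ^ 2 / ((n : ℝ) + 1)) atTop (𝓝 0) :=
    tendsto_const_nhds.div_atTop (tendsto_natCast_atTop_atTop.atTop_add tendsto_const_nhds)
  have h_error : Tendsto (fun n : ℕ ↦ ∫ u in (0 : ℝ)..1,
      u ^ n * ((cos ((n + 1) * θ) - u * cos (n * θ)) / (1 - 2 * u * cos θ + u ^ 2)))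
      atTop (𝓝 0) :=
    squeeze_zero_norm (fun n ↦ abs_integral_pow_mul_le (h_bound n) n) h_rate
  simpa [sum_cos_div_eq_neg_log_sub_integral hθ] using h_error.const_sub (-log (2 * sin (θ / 2)))

lemma sum_cos_two_pi_mul_div_add {q : ℕ} {m : ℤ} (hm : ¬(q : ℤ) ∣ m) (b : ℝ) :
    ∑ i ∈ range q, cos (2 * π * m / q * i + b) = 0 := by
  rcases Nat.eq_zero_or_pos q with rfl | hq
  · simp
  have hq' : (q : ℝ) ≠ 0 := by exact_mod_cast hq.ne'
  have h_ne (k : ℤ) : 2 * π * m / q ≠ k * (2 * π) := fun h ↦ hm ⟨k, by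
    have : 2 * π * m = 2 * π * (q * k) := by rw [div_eq_iff hq'] at h; linarith
    exact_mod_cast mul_left_cancel₀ two_pi_pos.ne' this⟩
  have h_sin : sin (q * (2 * π * m / q) / 2) = 0 := by
    rw [mul_div_cancel₀ _ hq', mul_assoc, mul_div_cancel_left₀ _ two_ne_zero, mul_comm,
      sin_int_mul_pi]
  rw [sum_cos q h_ne, h_sin, zero_mul, zero_div]

lemma sum_cos_two_pi_mul_div (q : ℕ) (m : ℤ) :
    ∑ j ∈ range q, cos (2 * π * j * m / q) = if (q : ℤ) ∣ m then (q : ℝ) else 0 := by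
  split_ifs with hm
  · obtain ⟨k, rfl⟩ := hm
    have h_one : ∀ j ∈ range q, cos (2 * π * j * (q * k : ℤ) / q) = 1 := fun j hj ↦ by
      have hq : (q : ℝ) ≠ 0 := by exact_mod_cast (Nat.zero_le j).trans_lt (mem_range.1 hj) |>.ne'
      rw [cos_eq_one_iff]
      refine ⟨j * k, ?_⟩
      push_cast
      field_simp
    rw [sum_congr rfl h_one]
    simp
  · rw [← sum_cos_two_pi_mul_div_add hm 0]
    exact sum_congr rfl fun j _ ↦ by ring_nf

lemma sin_pi_mul_div_pos {q j : ℕ} (hj : 0 < j) (hjq : j < q) : 0 < sin (π * j / q) := by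
  have hq : 0 < (q : ℝ) := Nat.cast_pos.2 (hj.trans hjq)
  refine sin_pos_of_pos_of_lt_pi (by positivity) ?_
  rw [div_lt_iff₀ hq]
  gcongr

theorem sum_cos_mul_digamma {q j : ℕ} (hj : 0 < j) (hjq : j < q) :
    ∑ i ∈ range q, cos (2 * π * j * (i + 1 : ℕ) / q) * digamma ((i + 1 : ℕ) / q) =
      q * log (2 * sin (π * j / q)) := by
  have hq : 0 < (q : ℝ) := Nat.cast_pos.2 (hj.trans hjq)
  set θ := 2 * π * j / q with hθ
  have h_half : θ / 2 = π * j / q := by rw [hθ]; ring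
  have h_sin : sin (θ / 2) ≠ 0 := h_half ▸ (sin_pi_mul_div_pos hj hjq).ne'
  have h_periodic : Function.Periodic (fun l : ℕ ↦ cos ((l + 1) * θ)) q := fun l ↦ by
    change cos (((l + q : ℕ) + 1) * θ) = cos ((l + 1) * θ)
    rw [← cos_add_nat_mul_two_pi ((l + 1) * θ) j, hθ]
    push_cast
    congr 1
    field_simp
    ring
  have h_zero : ∑ i ∈ range q, cos ((i + 1) * θ) = 0 := by
    have h_ndvd : ¬(q : ℤ) ∣ j := by exact_mod_cast Nat.not_dvd_of_pos_of_lt hj hjq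
    simpa [add_mul, mul_comm, hθ] using sum_cos_two_pi_mul_div_add h_ndvd θ
  have h_sub : Tendsto (fun n : ℕ ↦ ∑ l ∈ range (q * n), cos ((l + 1) * θ) / (l + 1)) atTop
      (𝓝 (-log (2 * sin (θ / 2)))) :=
    (tendsto_sum_cos_div h_sin).comp (tendsto_id.const_mul_atTop' (hj.trans hjq))
  have h_lim := tendsto_sum_periodic_mul_digamma (hj.trans hjq).ne' h_periodic
    (ne_neg_natCast_of_pos one_pos)
  simp only [h_zero, zero_mul, zero_sub, add_comm (1 : ℝ)] at h_lim
  have := tendsto_nhds_unique h_lim (h_sub.const_mul (q : ℝ)).neg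
  rw [mul_neg, neg_neg, h_half] at this
  rw [← this]
  refine sum_congr rfl fun i _ ↦ ?_
  push_cast
  rw [hθ]
  ring_nf

lemma sum_cos_mul_cos_two_pi_mul_div (q : ℕ) (m n : ℤ) :
    ∑ j ∈ range q, cos (2 * π * j * m / q) * cos (2 * π * j * n / q) =
      ((if (q : ℤ) ∣ m - n then (q : ℝ) else 0) + if (q : ℤ) ∣ m + n then (q : ℝ) else 0) / 2 := by
  rw [← sum_cos_two_pi_mul_div q, ← sum_cos_two_pi_mul_div q, ← sum_add_distrib, sum_div]
  refine sum_congr rfl fun j _ ↦ ?_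
  rw [eq_div_iff two_ne_zero, mul_comm _ (2 : ℝ), ← mul_assoc, two_mul_cos_mul_cos]
  push_cast
  ring_nf

lemma sum_cos_mul_sum_cos {q r : ℕ} (hr : 0 < r) (hrq : r < q) (f : ℕ → ℝ) :
    ∑ j ∈ range q, cos (2 * π * j * r / q) *
        ∑ i ∈ range q, cos (2 * π * j * (i + 1 : ℕ) / q) * f (i + 1) =
      q / 2 * (f r + f (q - r)) := by
  have h_sub {i : ℕ} (hi : i < q) : (q : ℤ) ∣ r - (i + 1 : ℕ) ↔ i = r - 1 := by
    refine ⟨fun h ↦ ?_, fun h ↦ ⟨0, by lia⟩⟩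
    have := Int.eq_zero_of_abs_lt_dvd h (by grind)
    lia
  have h_add {i : ℕ} (hi : i < q) : (q : ℤ) ∣ r + (i + 1 : ℕ) ↔ i = q - r - 1 := by
    refine ⟨fun h ↦ ?_, fun h ↦ ⟨1, by lia⟩⟩
    have := Int.eq_zero_of_abs_lt_dvd (h.sub (dvd_refl _)) (by grind)
    lia
  have h_orthogonal (i : ℕ) (hi : i ∈ range q) :
      ∑ j ∈ range q, cos (2 * π * j * r / q) * cos (2 * π * j * (i + 1 : ℕ) / q) =
        q / 2 * ((if i = r - 1 then 1 else 0) + if i = q - r - 1 then 1 else 0) := by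
    have h_int := sum_cos_mul_cos_two_pi_mul_div q r (i + 1 : ℕ)
    simp only [Int.cast_natCast, h_sub (mem_range.1 hi), h_add (mem_range.1 hi)] at h_int
    rw [h_int, mul_add, mul_ite, mul_ite, mul_one, mul_zero, add_div, ite_div, ite_div, zero_div]
  calc ∑ j ∈ range q, cos (2 * π * j * r / q) *
        ∑ i ∈ range q, cos (2 * π * j * (i + 1 : ℕ) / q) * f (i + 1)
      = ∑ i ∈ range q, (∑ j ∈ range q,
          cos (2 * π * j * r / q) * cos (2 * π * j * (i + 1 : ℕ) / q)) * f (i + 1) := by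
        simp_rw [mul_sum, sum_mul, ← mul_assoc]
        exact sum_comm
    _ = q / 2 * (f r + f (q - r)) := by
        rw [sum_congr rfl fun i hi ↦ by rw [h_orthogonal i hi]]
        simp_rw [mul_assoc, ← mul_sum, add_mul, ite_mul, zero_mul, one_mul, sum_add_distrib,
          sum_ite_eq']
        rw [if_pos (mem_range.2 (by lia)), if_pos (mem_range.2 (by lia)),
          Nat.sub_add_cancel hr, Nat.sub_add_cancel (Nat.sub_pos_of_lt hrq)]

lemma sum_cos_two_pi_mul_div_Ico_one {q r : ℕ} (hr : 0 < r) (hrq : r < q) :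
    ∑ j ∈ Ico 1 q, cos (2 * π * j * r / q) = -1 := by
  have h_ndvd : ¬(q : ℤ) ∣ r := by exact_mod_cast Nat.not_dvd_of_pos_of_lt hr hrq
  have h_sum := sum_cos_two_pi_mul_div q r
  rw [if_neg h_ndvd, sum_range_eq_add_Ico _ (hr.trans hrq)] at h_sum
  have h_zero : cos (2 * π * (0 : ℕ) * (r : ℤ) / q) = 1 := by simp
  rw [h_zero, Int.cast_natCast] at h_sum
  linarith

lemma sum_cos_mul_log_two_mul_sin {q r : ℕ} (hr : 0 < r) (hrq : r < q) :
    ∑ j ∈ Ico 1 q, cos (2 * π * j * r / q) * log (2 * sin (π * j / q)) =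
      -log 2 + ∑ j ∈ Ico 1 q, cos (2 * π * j * r / q) * log (sin (π * j / q)) := by
  have h_split : ∀ j ∈ Ico 1 q, cos (2 * π * j * r / q) * log (2 * sin (π * j / q)) =
      cos (2 * π * j * r / q) * log 2 + cos (2 * π * j * r / q) * log (sin (π * j / q)) :=
    fun j hj ↦ by
      obtain ⟨hj₁, hjq⟩ := mem_Ico.1 hj
      rw [log_mul two_ne_zero (sin_pi_mul_div_pos hj₁ hjq).ne', mul_add]
  rw [sum_congr rfl h_split, sum_add_distrib, ← sum_mul, sum_cos_two_pi_mul_div_Ico_one hr hrq,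
    neg_one_mul]

lemma digamma_div_add_digamma_one_sub_div {q r : ℕ} (hr : 0 < r) (hrq : r < q) :
    digamma (r / q) + digamma (1 - r / q) = 2 * (-eulerMascheroniConstant - log (2 * q) +
      ∑ j ∈ Ico 1 q, cos (2 * π * j * r / q) * log (sin (π * j / q))) := by
  have hq : (q : ℝ) ≠ 0 := by exact_mod_cast (hr.trans hrq).ne'
  have h_zero : ∑ i ∈ range q, digamma ((i + 1 : ℕ) / q) =
      q * (-eulerMascheroniConstant - log q) := by
    simpa [add_comm, digamma_one] using sum_digamma_add_div (hr.trans hrq).ne'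
      (ne_neg_natCast_of_pos one_pos)
  have h_pos : ∀ j ∈ Ico 1 q, cos (2 * π * j * r / q) *
      ∑ i ∈ range q, cos (2 * π * j * (i + 1 : ℕ) / q) * digamma ((i + 1 : ℕ) / q) =
      q * (cos (2 * π * j * r / q) * log (2 * sin (π * j / q))) := fun j hj ↦ by
    obtain ⟨hj₁, hjq⟩ := mem_Ico.1 hj
    rw [sum_cos_mul_digamma hj₁ hjq, mul_left_comm]
  have h_inversion := sum_cos_mul_sum_cos hr hrq fun p ↦ digamma (p / q)
  rw [sum_range_eq_add_Ico _ (hr.trans hrq), sum_congr rfl h_pos, ← mul_sum,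
    sum_cos_mul_log_two_mul_sin hr hrq, Nat.cast_sub hrq.le, sub_div, div_self hq] at h_inversion
  simp only [Nat.cast_zero, mul_zero, zero_mul, zero_div, cos_zero, one_mul, h_zero]
    at h_inversion
  rw [log_mul two_ne_zero hq]
  rw [← mul_add, div_mul_eq_mul_div, mul_div_assoc] at h_inversion
  have := mul_left_cancel₀ hq h_inversion
  linarith

theorem digamma_natCast_div {q r : ℕ} (hr : 0 < r) (hrq : r < q) :
    digamma (r / q) = -eulerMascheroniConstant - log (2 * q) - π / 2 * cot (π * (r / q)) +
      ∑ j ∈ Ico 1 q, cos (2 * π * j * r / q) * log (sin (π * j / q)) := by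
  have hq : 0 < (q : ℝ) := Nat.cast_pos.2 (hr.trans hrq)
  have h_nonint (m : ℤ) : (r / q : ℝ) ≠ m := fun h ↦ by
    rw [div_eq_iff hq.ne'] at h
    have h_dvd : (q : ℤ) ∣ r := Dvd.intro_left m (by exact_mod_cast h.symm)
    exact Nat.not_dvd_of_pos_of_lt hr hrq (by exact_mod_cast h_dvd)
  have h_sum := digamma_div_add_digamma_one_sub_div hr hrq
  rw [digamma_one_sub h_nonint] at h_sum
  linarith

lemma cos_pi_div_eight_eq_mul_sin : cos (π / 8) = (1 + √2) * sin (π / 8) := by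
  have h_eight : 2 * (π / 8) = π / 4 := by ring
  have h_cos : 2 * cos (π / 8) ^ 2 - 1 = √2 / 2 := by
    rw [← cos_two_mul, h_eight, cos_pi_div_four]
  have h_sin : 2 * sin (π / 8) * cos (π / 8) = √2 / 2 := by
    rw [← sin_two_mul, h_eight, sin_pi_div_four]
  have h_cos_pos : 0 < cos (π / 8) :=
    cos_pos_of_mem_Ioo ⟨by linarith [pi_pos], by linarith [pi_pos]⟩
  refine mul_right_cancel₀ h_cos_pos.ne' ?_
  nlinarith [sq_sqrt (zero_le_two (α := ℝ))]

lemma sin_pi_div_eight_pos : 0 < sin (π / 8) :=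
  sin_pos_of_pos_of_lt_pi (by positivity) (by linarith [pi_pos])

lemma cot_three_mul_pi_div_eight : cot (π * (3 / 8)) = √2 - 1 := by
  have h_compl : π * (3 / 8) = π / 2 - π / 8 := by ring
  have h_sin := sin_pi_div_eight_pos
  rw [cot_eq_cos_div_sin, h_compl, cos_pi_div_two_sub, sin_pi_div_two_sub,
    cos_pi_div_eight_eq_mul_sin, div_eq_iff (by positivity)]
  linear_combination -sin (π / 8) * sq_sqrt (zero_le_two (α := ℝ))

lemma sum_cos_mul_log_sin_eight :
    ∑ j ∈ Ico (1 : ℕ) 8, cos (2 * π * j * 3 / 8) * log (sin (π * j / 8)) = √2 * log (1 + √2) := by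
  let t (x : ℝ) : ℝ := cos (2 * π * x * 3 / 8) * log (sin (π * x / 8))
  have h_symm (x : ℝ) : t (8 - x) = t x := by
    simp only [t]
    rw [show 2 * π * (8 - x) * 3 / 8 = (3 : ℕ) * (2 * π) - 2 * π * x * 3 / 8 by push_cast; ring,
      show π * (8 - x) / 8 = π - π * x / 8 by ring, cos_nat_mul_two_pi_sub, sin_pi_sub]
  have h_one : t 1 = -(√2 / 2) * log (sin (π / 8)) := by
    simp only [t]
    rw [show 2 * π * 1 * 3 / 8 = π - π / 4 by ring, cos_pi_sub, cos_pi_div_four, mul_one]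
  have h_two : t 2 = 0 := by
    simp only [t]
    rw [show 2 * π * 2 * 3 / 8 = π / 2 + π by ring, cos_add_pi, cos_pi_div_two, neg_zero, zero_mul]
  have h_three : t 3 = √2 / 2 * (log (1 + √2) + log (sin (π / 8))) := by
    simp only [t]
    rw [show 2 * π * 3 * 3 / 8 = π / 4 + 2 * π by ring, cos_add_two_pi, cos_pi_div_four,
      show π * 3 / 8 = π / 2 - π / 8 by ring, sin_pi_div_two_sub, cos_pi_div_eight_eq_mul_sin,
      log_mul (by positivity) sin_pi_div_eight_pos.ne']
  have h_four : t 4 = 0 := by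
    simp only [t]
    rw [show π * 4 / 8 = π / 2 by ring, sin_pi_div_two, log_one, mul_zero]
  calc ∑ j ∈ Ico (1 : ℕ) 8, t j = t 1 + t 2 + t 3 + t 4 + t (8 - 3) + t (8 - 2) + t (8 - 1) := by
        norm_num [sum_Ico_succ_top]
    _ = √2 * log (1 + √2) := by
        rw [h_symm, h_symm, h_symm, h_one, h_two, h_three, h_four]
        ring

theorem digamma_three_eighths :
    digamma (3 / 8) =
      -Real.eulerMascheroniConstant - (Real.sqrt 2 - 1) * (Real.pi / 2)
        - 4 * Real.log 2 + Real.sqrt 2 * Real.log (1 + Real.sqrt 2) := by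
  have h_gauss := digamma_natCast_div (q := 8) (r := 3) (by norm_num) (by norm_num)
  have h_log : log (2 * 8) = 4 * log 2 := by
    rw [show (2 * 8 : ℝ) = 2 ^ 4 by norm_num, log_pow, Nat.cast_ofNat]
  push_cast at h_gauss
  rw [cot_three_mul_pi_div_eight, sum_cos_mul_log_sin_eight, h_log] at h_gauss
  linarith
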